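/- arXiv:1001.0699 — 4 statements merged into one kernel-verified Lean document; each statement's English description precedes it below -/
import Mathlib

section
/- Let e, n, ξ, κ, τ, σ be a spacelike frame system of type {space, time, space} along an interval I, β the striction curve with β' = cos σ · e + sin σ · ξ, and φ(u,v) = β(u) + v·e(u), so that φ_u(u,v) = β'(u) + v·e'(u) and φ_v(u,v) = e(u). Then φ_u ∧ φ_v = sin σ(u) · n(u) + v κ(u) · ξ(u), and g(φ_u ∧ φ_v, φ_u ∧ φ_v) = −sin²σ(u) + v²κ(u)²; in particular the normal vector φ_u ∧ φ_v is timelike (g(φ_u ∧ φ_v, φ_u ∧ φ_v) < 0) if and only if v²κ(u)² < sin²σ(u). -/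
noncomputable section

/-- Lorentz metric on ℝ³: g(v,w) = v₁w₁ + v₂w₂ − v₃w₃. -/
def lg (v w : Fin 3 → ℝ) : ℝ := v 0 * w 0 + v 1 * w 1 - v 2 * w 2

/-- Lorentzian cross product: v ∧ w = (v₃w₂ − v₂w₃, v₁w₃ − v₃w₁, v₁w₂ − v₂w₁). -/
def lcross (v w : Fin 3 → ℝ) : Fin 3 → ℝ :=
  ![v 2 * w 1 - v 1 * w 2, v 0 * w 2 - v 2 * w 0, v 0 * w 1 - v 1 * w 0]

/-- Determinant of the 3×3 matrix with rows a, b, c. -/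
def ldet (a b c : Fin 3 → ℝ) : ℝ :=
  Matrix.det !![a 0, a 1, a 2; b 0, b 1, b 2; c 0, c 1, c 2]

section LorentzAlgebra

variable (a b c : ℝ) (u v w : Fin 3 → ℝ)

theorem lg_smul_add_smul_self :
    lg (a • v + b • w) (a • v + b • w) =
      a ^ 2 * lg v v + 2 * (a * b) * lg v w + b ^ 2 * lg w w := by
  simp only [lg, Pi.add_apply, Pi.smul_apply, smul_eq_mul]
  ring

theorem lcross_add_left : lcross (u + v) w = lcross u w + lcross v w := by
  ext i
  fin_cases i <;> simp [lcross] <;> ring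

theorem lcross_smul_left : lcross (a • v) w = a • lcross v w := by
  ext i
  fin_cases i <;> simp [lcross] <;> ring

theorem lcross_self : lcross v v = 0 := by
  ext i
  fin_cases i <;> simp [lcross] <;> ring

theorem lcross_anticomm : lcross v w = -lcross w v := by
  ext i
  fin_cases i <;> simp [lcross] <;> ring

variable {e n ξ : Fin 3 → ℝ}

theorem lcross_frame_combination_left (hcross_en : lcross e n = -ξ)
    (hcross_ξe : lcross ξ e = n) :
    lcross (a • e + b • ξ + c • n) e = b • n + c • ξ := by
  have hne : lcross n e = ξ := by rw [lcross_anticomm, hcross_en, neg_neg]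
  simp only [lcross_add_left, lcross_smul_left, lcross_self, hcross_ξe, hne, smul_zero,
    zero_add]

theorem lg_smul_add_smul_self_of_time_space (hnn : lg n n = -1) (hξξ : lg ξ ξ = 1)
    (hnξ : lg n ξ = 0) :
    lg (a • n + b • ξ) (a • n + b • ξ) = -a ^ 2 + b ^ 2 := by
  rw [lg_smul_add_smul_self, hnn, hξξ, hnξ]
  ring

end LorentzAlgebra

/-- Normal vector of the spacelike ruled surface and its causal character. -/
theorem stmt1
    (I : Set ℝ) (hI : IsOpen I)
    (e n ξ β : ℝ → Fin 3 → ℝ) (κ τ σ : ℝ → ℝ)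
    (hde : ∀ u ∈ I, DifferentiableAt ℝ e u)
    (hdn : ∀ u ∈ I, DifferentiableAt ℝ n u)
    (hdξ : ∀ u ∈ I, DifferentiableAt ℝ ξ u)
    (hdβ : ∀ u ∈ I, DifferentiableAt ℝ β u)
    (hκ0 : ∀ u ∈ I, κ u ≠ 0)
    (hee : ∀ u ∈ I, lg (e u) (e u) = 1)
    (hnn : ∀ u ∈ I, lg (n u) (n u) = -1)
    (hξξ : ∀ u ∈ I, lg (ξ u) (ξ u) = 1)
    (hen : ∀ u ∈ I, lg (e u) (n u) = 0)
    (hnξ : ∀ u ∈ I, lg (n u) (ξ u) = 0)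
    (hξe : ∀ u ∈ I, lg (ξ u) (e u) = 0)
    (hc1 : ∀ u ∈ I, lcross (e u) (n u) = -ξ u)
    (hc2 : ∀ u ∈ I, lcross (n u) (ξ u) = -e u)
    (hc3 : ∀ u ∈ I, lcross (ξ u) (e u) = n u)
    (hfe : ∀ u ∈ I, deriv e u = κ u • n u)
    (hfn : ∀ u ∈ I, deriv n u = κ u • e u + τ u • ξ u)
    (hfξ : ∀ u ∈ I, deriv ξ u = τ u • n u)
    (hβ' : ∀ u ∈ I, deriv β u = Real.cos (σ u) • e u + Real.sin (σ u) • ξ u) :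
    ∀ u ∈ I, ∀ v : ℝ,
      lcross (deriv β u + v • deriv e u) (e u)
          = Real.sin (σ u) • n u + (v * κ u) • ξ u
      ∧ lg (lcross (deriv β u + v • deriv e u) (e u))
            (lcross (deriv β u + v • deriv e u) (e u))
          = -(Real.sin (σ u)) ^ 2 + v ^ 2 * (κ u) ^ 2
      ∧ (lg (lcross (deriv β u + v • deriv e u) (e u))
            (lcross (deriv β u + v • deriv e u) (e u)) < 0
          ↔ v ^ 2 * (κ u) ^ 2 < (Real.sin (σ u)) ^ 2) := by
  intro u hu v
  have hφu : deriv β u + v • deriv e u =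
      Real.cos (σ u) • e u + Real.sin (σ u) • ξ u + (v * κ u) • n u := by
    rw [hβ' u hu, hfe u hu, smul_smul]
  have hnormal : lcross (deriv β u + v • deriv e u) (e u) =
      Real.sin (σ u) • n u + (v * κ u) • ξ u := by
    rw [hφu, lcross_frame_combination_left _ _ _ (hc1 u hu) (hc3 u hu)]
  have hnorm : lg (lcross (deriv β u + v • deriv e u) (e u))
      (lcross (deriv β u + v • deriv e u) (e u)) =
      -(Real.sin (σ u)) ^ 2 + v ^ 2 * (κ u) ^ 2 := by
    rw [hnormal, lg_smul_add_smul_self_of_time_space _ _ (hnn u hu) (hξξ u hu) (hnξ u hu),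
      mul_pow]
  exact ⟨hnormal, hnorm, by rw [hnorm, neg_add_neg_iff]⟩
end
end

section
/- Let e, n, ξ, κ, τ, σ be a spacelike frame system of type {space, time, space} along an interval I with κ, τ, σ differentiable, β the striction curve with β' = cos σ · e + sin σ · ξ, and φ(u,v) = β(u) + v·e(u). Fix (u,v) with −sin²σ(u) + v²κ(u)² ≠ 0 and set η = (sin σ(u)·n(u) + vκ(u)·ξ(u)) / √|−sin²σ(u) + v²κ(u)²|. Then the second fundamental form coefficients satisfy: g(φ_uu, η) = (−κ cos σ sin σ − τ sin²σ − vκ' sin σ + vκσ' cos σ + v²κ²τ)/√|−sin²σ + v²κ²|, g(φ_uv, η) = −κ sin σ / √|−sin²σ + v²κ²|, and g(φ_vv, η) = 0, where φ_uu = β'' + v·e'', φ_uv = e' and φ_vv = 0, all evaluated at u. -/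
noncomputable section

/-!
In the frame `e, n, ξ` the Frenet equations turn `φ_uu = β'' + v e''` and `φ_uv = e'` into explicit
linear combinations of the frame vectors. The normal `η` is a multiple of `sin σ · n + vκ · ξ`, so
orthogonality leaves only the products of the `n`- and `ξ`-coordinates, the former with a minus sign
because `n` is timelike.
-/

section FrameAlgebra

variable {R M : Type*} [CommRing R] [AddCommGroup M] [Module R M]

theorem bilin_frame_combination_apply {B : LinearMap.BilinForm R M} {e n ξ : M}
    (hen : B e n = 0) (heξ : B e ξ = 0) (hnn : B n n = -1) (hnξ : B n ξ = 0)
    (hξn : B ξ n = 0) (hξξ : B ξ ξ = 1) (p q r y z c : R) :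
    B (p • e + q • n + r • ξ) (c • (y • n + z • ξ)) = c * (r * z - q * y) := by
  simp only [map_add, map_smul, LinearMap.add_apply, LinearMap.smul_apply, smul_eq_mul,
    hen, heξ, hnn, hnξ, hξn, hξξ]
  ring

end FrameAlgebra

section FrenetEquations

open Topology

variable {𝕜 E : Type*} [NontriviallyNormedField 𝕜] [NormedAddCommGroup E] [NormedSpace 𝕜 E]
  {e n ξ β : 𝕜 → E} {κ τ a b : 𝕜 → 𝕜} {κ' a' b' u : 𝕜}

theorem deriv_deriv_of_frenet (he : ∀ᶠ t in 𝓝 u, HasDerivAt e (κ t • n t) t)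
    (hn : HasDerivAt n (κ u • e u + τ u • ξ u) u) (hκ : HasDerivAt κ κ' u) :
    deriv (deriv e) u = κ u ^ 2 • e u + κ' • n u + (κ u * τ u) • ξ u := by
  have hderiv : deriv e =ᶠ[𝓝 u] fun t => κ t • n t := he.mono fun _ ht => ht.deriv
  calc
    deriv (deriv e) u = κ u • (κ u • e u + τ u • ξ u) + κ' • n u := by
      rw [hderiv.deriv_eq]
      exact (hκ.smul hn).deriv
    _ = κ u ^ 2 • e u + κ' • n u + (κ u * τ u) • ξ u := by module

theorem deriv_deriv_of_tangent_eq_smul_add_smul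
    (hβ : ∀ᶠ t in 𝓝 u, HasDerivAt β (a t • e t + b t • ξ t) t)
    (he : HasDerivAt e (κ u • n u) u) (hξ : HasDerivAt ξ (τ u • n u) u)
    (ha : HasDerivAt a a' u) (hb : HasDerivAt b b' u) :
    deriv (deriv β) u = a' • e u + (a u * κ u + b u * τ u) • n u + b' • ξ u := by
  have hderiv : deriv β =ᶠ[𝓝 u] fun t => a t • e t + b t • ξ t := hβ.mono fun _ ht => ht.deriv
  calc
    deriv (deriv β) u
        = (a u • κ u • n u + a' • e u) + (b u • τ u • n u + b' • ξ u) := by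
      rw [hderiv.deriv_eq]
      exact ((ha.smul he).add (hb.smul hξ)).deriv
    _ = a' • e u + (a u * κ u + b u * τ u) • n u + b' • ξ u := by module

theorem ruled_deriv_deriv_eq_frame_combination
    (he : ∀ᶠ t in 𝓝 u, HasDerivAt e (κ t • n t) t)
    (hn : HasDerivAt n (κ u • e u + τ u • ξ u) u) (hξ : HasDerivAt ξ (τ u • n u) u)
    (hβ : ∀ᶠ t in 𝓝 u, HasDerivAt β (a t • e t + b t • ξ t) t)
    (hκ : HasDerivAt κ κ' u) (ha : HasDerivAt a a' u) (hb : HasDerivAt b b' u) (v : 𝕜) :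
    deriv (deriv β) u + v • deriv (deriv e) u
      = (a' + v * κ u ^ 2) • e u + (a u * κ u + b u * τ u + v * κ') • n u
        + (b' + v * (κ u * τ u)) • ξ u := by
  rw [deriv_deriv_of_frenet he hn hκ,
    deriv_deriv_of_tangent_eq_smul_add_smul hβ he.self_of_nhds hξ ha hb]
  module

end FrenetEquations

/-- The Lorentz metric `lg` bundled as a bilinear form, so that results about bilinear forms on
arbitrary spaces apply to it. -/
def lorentzForm : LinearMap.BilinForm ℝ (Fin 3 → ℝ) :=
  LinearMap.mk₂ ℝ lg
    (fun x y z => by simp only [lg, Pi.add_apply]; ring)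
    (fun c x y => by simp only [lg, Pi.smul_apply, smul_eq_mul]; ring)
    (fun x y z => by simp only [lg, Pi.add_apply]; ring)
    (fun c x y => by simp only [lg, Pi.smul_apply, smul_eq_mul]; ring)

theorem lg_comm (x y : Fin 3 → ℝ) : lg x y = lg y x := by
  simp only [lg, mul_comm]

theorem stmt3_general {E : Type*} [NormedAddCommGroup E] [NormedSpace ℝ E]
    (B : LinearMap.BilinForm ℝ E) {I : Set ℝ} (hI : IsOpen I)
    {e n ξ β : ℝ → E} {κ τ σ : ℝ → ℝ}
    (hnn : ∀ u ∈ I, B (n u) (n u) = -1) (hξξ : ∀ u ∈ I, B (ξ u) (ξ u) = 1)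
    (hen : ∀ u ∈ I, B (e u) (n u) = 0) (heξ : ∀ u ∈ I, B (e u) (ξ u) = 0)
    (hnξ : ∀ u ∈ I, B (n u) (ξ u) = 0) (hξn : ∀ u ∈ I, B (ξ u) (n u) = 0)
    (he : ∀ u ∈ I, HasDerivAt e (κ u • n u) u)
    (hn : ∀ u ∈ I, HasDerivAt n (κ u • e u + τ u • ξ u) u)
    (hξ : ∀ u ∈ I, HasDerivAt ξ (τ u • n u) u)
    (hβ : ∀ u ∈ I, HasDerivAt β (Real.cos (σ u) • e u + Real.sin (σ u) • ξ u) u)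
    (hκ : ∀ u ∈ I, DifferentiableAt ℝ κ u) (hσ : ∀ u ∈ I, DifferentiableAt ℝ σ u) :
    ∀ u ∈ I, ∀ v : ℝ,
      -(Real.sin (σ u)) ^ 2 + v ^ 2 * (κ u) ^ 2 ≠ 0 →
      let D := Real.sqrt |(-(Real.sin (σ u)) ^ 2 + v ^ 2 * (κ u) ^ 2)|
      let η := D⁻¹ • (Real.sin (σ u) • n u + (v * κ u) • ξ u)
      B (deriv (deriv β) u + v • deriv (deriv e) u) η
          = (-(κ u) * Real.cos (σ u) * Real.sin (σ u)
              - τ u * (Real.sin (σ u)) ^ 2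
              - v * deriv κ u * Real.sin (σ u)
              + v * κ u * deriv σ u * Real.cos (σ u)
              + v ^ 2 * (κ u) ^ 2 * τ u) / D
      ∧ B (deriv e u) η = -(κ u * Real.sin (σ u)) / D
      ∧ B 0 η = 0 := by
  intro u hu v _ D η
  have hIu : ∀ᶠ t in nhds u, t ∈ I := hI.mem_nhds hu
  have hη (p q r : ℝ) : B (p • e u + q • n u + r • ξ u) η
      = D⁻¹ * (r * (v * κ u) - q * Real.sin (σ u)) :=
    bilin_frame_combination_apply (hen u hu) (heξ u hu) (hnn u hu) (hnξ u hu) (hξn u hu)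
      (hξξ u hu) p q r _ _ _
  refine ⟨?_, ?_, LinearMap.map_zero₂ B η⟩
  · have hφuu := ruled_deriv_deriv_eq_frame_combination (hIu.mono he) (hn u hu) (hξ u hu)
      (hIu.mono hβ) (hκ u hu).hasDerivAt (hσ u hu).hasDerivAt.cos (hσ u hu).hasDerivAt.sin v
    rw [hφuu, hη]
    ring
  · have hφuv : deriv e u = (0 : ℝ) • e u + κ u • n u + (0 : ℝ) • ξ u := by
      rw [(he u hu).deriv]
      module
    rw [hφuv, hη]
    ring

/-- Second fundamental form coefficients of the spacelike ruled surface. -/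
theorem stmt3
    (I : Set ℝ) (hI : IsOpen I)
    (e n ξ β : ℝ → Fin 3 → ℝ) (κ τ σ : ℝ → ℝ)
    (hde : ∀ u ∈ I, DifferentiableAt ℝ e u)
    (hdn : ∀ u ∈ I, DifferentiableAt ℝ n u)
    (hdξ : ∀ u ∈ I, DifferentiableAt ℝ ξ u)
    (hdβ : ∀ u ∈ I, DifferentiableAt ℝ β u)
    (hκ0 : ∀ u ∈ I, κ u ≠ 0)
    (hee : ∀ u ∈ I, lg (e u) (e u) = 1)
    (hnn : ∀ u ∈ I, lg (n u) (n u) = -1)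
    (hξξ : ∀ u ∈ I, lg (ξ u) (ξ u) = 1)
    (hen : ∀ u ∈ I, lg (e u) (n u) = 0)
    (hnξ : ∀ u ∈ I, lg (n u) (ξ u) = 0)
    (hξe : ∀ u ∈ I, lg (ξ u) (e u) = 0)
    (hc1 : ∀ u ∈ I, lcross (e u) (n u) = -ξ u)
    (hc2 : ∀ u ∈ I, lcross (n u) (ξ u) = -e u)
    (hc3 : ∀ u ∈ I, lcross (ξ u) (e u) = n u)
    (hfe : ∀ u ∈ I, deriv e u = κ u • n u)
    (hfn : ∀ u ∈ I, deriv n u = κ u • e u + τ u • ξ u)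
    (hfξ : ∀ u ∈ I, deriv ξ u = τ u • n u)
    (hβ' : ∀ u ∈ I, deriv β u = Real.cos (σ u) • e u + Real.sin (σ u) • ξ u)
    (hdκ : ∀ u ∈ I, DifferentiableAt ℝ κ u)
    (hdτ : ∀ u ∈ I, DifferentiableAt ℝ τ u)
    (hdσ : ∀ u ∈ I, DifferentiableAt ℝ σ u)
    (hd2e : ∀ u ∈ I, DifferentiableAt ℝ (deriv e) u)
    (hd2β : ∀ u ∈ I, DifferentiableAt ℝ (deriv β) u) :
    ∀ u ∈ I, ∀ v : ℝ,
      -(Real.sin (σ u)) ^ 2 + v ^ 2 * (κ u) ^ 2 ≠ 0 →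
      let D := Real.sqrt |(-(Real.sin (σ u)) ^ 2 + v ^ 2 * (κ u) ^ 2)|
      let η := D⁻¹ • (Real.sin (σ u) • n u + (v * κ u) • ξ u)
      lg (deriv (deriv β) u + v • deriv (deriv e) u) η
          = (-(κ u) * Real.cos (σ u) * Real.sin (σ u)
              - τ u * (Real.sin (σ u)) ^ 2
              - v * deriv κ u * Real.sin (σ u)
              + v * κ u * deriv σ u * Real.cos (σ u)
              + v ^ 2 * (κ u) ^ 2 * τ u) / D
      ∧ lg (deriv e u) η = -(κ u * Real.sin (σ u)) / D
      ∧ lg (0 : Fin 3 → ℝ) η = 0 :=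
  stmt3_general lorentzForm hI hnn hξξ hen (fun u hu => (lg_comm _ _).trans (hξe u hu)) hnξ
    (fun u hu => (lg_comm _ _).trans (hnξ u hu))
    (fun u hu => (hde u hu).hasDerivAt.congr_deriv (hfe u hu))
    (fun u hu => (hdn u hu).hasDerivAt.congr_deriv (hfn u hu))
    (fun u hu => (hdξ u hu).hasDerivAt.congr_deriv (hfξ u hu))
    (fun u hu => (hdβ u hu).hasDerivAt.congr_deriv (hβ' u hu)) hdκ hdσ
end
end

section
/- (Example 4.1: second type helicoid.) Define φ : ℝ × ℝ → ℝ³ by φ(u,v) = (−v cosh u, u, −v sinh u). For |v| < 1, the Lorentzian normal satisfies g(φ_u ∧ φ_v, φ_u ∧ φ_v) = v² − 1 < 0 (so the surface is spacelike), and with η = (φ_u ∧ φ_v)/√|g(φ_u ∧ φ_v, φ_u ∧ φ_v)| the Gaussian curvature K = (g(φ_uu,η)·g(φ_vv,η) − g(φ_uv,η)²)/(g(φ_u,φ_u)·g(φ_v,φ_v) − g(φ_u,φ_v)²) equals −1/(1 − v²)². -/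
noncomputable section

/-!
The helicoid is the ruled surface `α u + v • β u` with directrix `α u = (0, u, 0)` and unit rulings
`β u = -(cosh u, 0, sinh u)`. Pairing with `φ_u ∧ φ_v` is a determinant and `φ_vv` vanishes on a
ruled surface, so with `W = EG - F²` its curvature is `-det(α', β, β')² / (|W| W)`. Here the
determinant is constant of absolute value `1` and `W = 1 - v²`, while the Lorentzian Lagrange
identity `g(a ∧ b, a ∧ b) = -W` determines the causal character.
-/

section LorentzAlgebra

/-- The determinant `EG - F²` of the first fundamental form of the plane spanned by `a` and `b`. -/
def gramDet (a b : Fin 3 → ℝ) : ℝ := lg a a * lg b b - lg a b ^ 2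

/-- The Lorentzian unit normal `η` to the plane spanned by `a` and `b`. It is `0` when `a ∧ b` is
lightlike, because `0⁻¹ = 0`. -/
def unitNormal (a b : Fin 3 → ℝ) : Fin 3 → ℝ :=
  (Real.sqrt |lg (lcross a b) (lcross a b)|)⁻¹ • lcross a b

variable (a b c : Fin 3 → ℝ)

theorem lg_smul_right (r : ℝ) : lg a (r • b) = r * lg a b := by
  simp only [lg, Pi.smul_apply, smul_eq_mul]
  ring

theorem lg_lcross_right : lg c (lcross a b) = -ldet a b c := by
  simp only [lg, lcross, ldet, Matrix.det_fin_three, Matrix.of_apply, Matrix.cons_val]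
  ring

theorem lg_lcross_self : lg (lcross a b) (lcross a b) = -gramDet a b := by
  simp only [lg, lcross, gramDet, Matrix.cons_val]
  ring

theorem lg_unitNormal : lg c (unitNormal a b) = -(ldet a b c / Real.sqrt |gramDet a b|) := by
  rw [unitNormal, lg_smul_right, lg_lcross_self, lg_lcross_right, abs_neg, div_eq_inv_mul,
    mul_neg]

theorem ldet_zero_right : ldet a b 0 = 0 := by
  simp [ldet, Matrix.det_fin_three]

theorem ldet_add_smul_left (r : ℝ) : ldet (a + r • c) b c = ldet a b c := by
  simp only [ldet, Matrix.det_fin_three, Matrix.of_apply, Matrix.cons_val, Pi.add_apply,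
    Pi.smul_apply, smul_eq_mul]
  ring

end LorentzAlgebra

section Curvature

variable {E : Type*} [NormedAddCommGroup E] [NormedSpace ℝ E]

/-- The partial derivative `φ_u` of a two-parameter map. -/
def partialFst (φ : ℝ → ℝ → E) (u v : ℝ) : E := deriv (fun x => φ x v) u

/-- The partial derivative `φ_v` of a two-parameter map. -/
def partialSnd (φ : ℝ → ℝ → E) (u v : ℝ) : E := deriv (fun y => φ u y) v

/-- The Gaussian curvature of a parametrized surface in Lorentzian `ℝ³`, as the quotient of the
determinants of the second and first fundamental forms. The factor `g(η, η)` of the Gauss equation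
is left out, so on a spacelike surface this is the negative of the intrinsic curvature. -/
def gaussCurvature (φ : ℝ → ℝ → Fin 3 → ℝ) (u v : ℝ) : ℝ :=
  let η := unitNormal (partialFst φ u v) (partialSnd φ u v)
  (lg (partialFst (partialFst φ) u v) η * lg (partialSnd (partialSnd φ) u v) η
      - lg (partialSnd (partialFst φ) u v) η ^ 2)
    / gramDet (partialFst φ u v) (partialSnd φ u v)

theorem gaussCurvature_eq_of_partialSnd_partialSnd_eq_zero {φ : ℝ → ℝ → Fin 3 → ℝ} {u v : ℝ}
    (h : partialSnd (partialSnd φ) u v = 0) :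
    gaussCurvature φ u v =
      -ldet (partialFst φ u v) (partialSnd φ u v) (partialSnd (partialFst φ) u v) ^ 2
        / (|gramDet (partialFst φ u v) (partialSnd φ u v)|
          * gramDet (partialFst φ u v) (partialSnd φ u v)) := by
  simp only [gaussCurvature, lg_unitNormal, h, ldet_zero_right, neg_sq, div_pow,
    Real.sq_sqrt (abs_nonneg _), zero_div, neg_zero, mul_zero, zero_sub, neg_div, div_div]

end Curvature

section RuledSurface

variable {E : Type*} [NormedAddCommGroup E] [NormedSpace ℝ E]

/-- The ruled surface with directrix `α` whose ruling through `α u` has direction `β u`. -/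
def ruledSurface (α β : ℝ → E) (u v : ℝ) : E := α u + v • β u

theorem partialSnd_ruledSurface (α β : ℝ → E) (u v : ℝ) :
    partialSnd (ruledSurface α β) u v = β u :=
  (((hasDerivAt_id v).smul_const (β u)).const_add (α u)).deriv.trans (one_smul ℝ (β u))

theorem partialSnd_partialSnd_ruledSurface (α β : ℝ → E) (u v : ℝ) :
    partialSnd (partialSnd (ruledSurface α β)) u v = 0 := by
  rw [partialSnd, funext (partialSnd_ruledSurface α β u), deriv_const]

variable {α β : ℝ → E} {α' β' : E} {u : ℝ}

theorem partialFst_ruledSurface (hα : HasDerivAt α α' u) (hβ : HasDerivAt β β' u) (v : ℝ) :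
    partialFst (ruledSurface α β) u v = α' + v • β' :=
  (hα.add (hβ.const_smul v)).deriv

theorem partialSnd_partialFst_ruledSurface (hα : HasDerivAt α α' u) (hβ : HasDerivAt β β' u)
    (v : ℝ) : partialSnd (partialFst (ruledSurface α β)) u v = β' := by
  have hFst : partialFst (ruledSurface α β) u = ruledSurface (fun _ => α') (fun _ => β') u :=
    funext (partialFst_ruledSurface hα hβ)
  rw [partialSnd, hFst]
  exact partialSnd_ruledSurface (fun _ => α') (fun _ => β') u v

theorem gaussCurvature_ruledSurface {α β : ℝ → Fin 3 → ℝ} {α' β' : Fin 3 → ℝ}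
    (hα : HasDerivAt α α' u) (hβ : HasDerivAt β β' u) (v : ℝ) :
    gaussCurvature (ruledSurface α β) u v =
      -ldet α' (β u) β' ^ 2
        / (|gramDet (α' + v • β') (β u)| * gramDet (α' + v • β') (β u)) := by
  rw [gaussCurvature_eq_of_partialSnd_partialSnd_eq_zero
      (partialSnd_partialSnd_ruledSurface α β u v),
    partialSnd_partialFst_ruledSurface hα hβ, partialFst_ruledSurface hα hβ,
    partialSnd_ruledSurface, ldet_add_smul_left]

end RuledSurface

section Helicoid

/-- The axis of the second type helicoid, its directrix as a ruled surface. -/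
def helicoidAxis (u : ℝ) : Fin 3 → ℝ := ![0, u, 0]

/-- The direction of the rulings of the second type helicoid. -/
def helicoidRuling (u : ℝ) : Fin 3 → ℝ := ![-Real.cosh u, 0, -Real.sinh u]

/-- The second type helicoid `(-v cosh u, u, -v sinh u)`, encoded as a ruled surface. -/
def helicoid : ℝ → ℝ → Fin 3 → ℝ := ruledSurface helicoidAxis helicoidRuling

theorem helicoid_apply (u v : ℝ) :
    helicoid u v = ![-v * Real.cosh u, u, -v * Real.sinh u] := by
  simp [helicoid, ruledSurface, helicoidAxis, helicoidRuling]

theorem hasDerivAt_helicoidAxis (u : ℝ) : HasDerivAt helicoidAxis ![0, 1, 0] u := by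
  refine hasDerivAt_pi.2 (Fin.forall_fin_succ.2 ⟨?_, Fin.forall_fin_two.2 ⟨?_, ?_⟩⟩)
  exacts [hasDerivAt_const u 0, hasDerivAt_id u, hasDerivAt_const u 0]

theorem hasDerivAt_helicoidRuling (u : ℝ) :
    HasDerivAt helicoidRuling ![-Real.sinh u, 0, -Real.cosh u] u := by
  refine hasDerivAt_pi.2 (Fin.forall_fin_succ.2 ⟨?_, Fin.forall_fin_two.2 ⟨?_, ?_⟩⟩)
  exacts [(Real.hasDerivAt_cosh u).neg, hasDerivAt_const u 0, (Real.hasDerivAt_sinh u).neg]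

theorem ldet_helicoid (u : ℝ) :
    ldet ![0, 1, 0] (helicoidRuling u) ![-Real.sinh u, 0, -Real.cosh u] = -1 := by
  simp only [ldet, Matrix.det_fin_three, helicoidRuling, Matrix.of_apply, Matrix.cons_val]
  linear_combination -Real.cosh_sq u

theorem gramDet_helicoid (u v : ℝ) :
    gramDet (![0, 1, 0] + v • ![-Real.sinh u, 0, -Real.cosh u]) (helicoidRuling u) = 1 - v ^ 2 := by
  set a : Fin 3 → ℝ := ![0, 1, 0] + v • ![-Real.sinh u, 0, -Real.cosh u] with ha
  have hE : lg a a = 1 - v ^ 2 := by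
    simp only [ha, lg, Pi.add_apply, Pi.smul_apply, smul_eq_mul, Matrix.cons_val]
    linear_combination -v ^ 2 * Real.cosh_sq u
  have hF : lg a (helicoidRuling u) = 0 := by
    simp only [ha, lg, helicoidRuling, Pi.add_apply, Pi.smul_apply, smul_eq_mul, Matrix.cons_val]
    ring
  have hG : lg (helicoidRuling u) (helicoidRuling u) = 1 := by
    simp only [lg, helicoidRuling, Matrix.cons_val]
    linear_combination Real.cosh_sq u
  rw [gramDet, hE, hF, hG]
  ring

theorem gramDet_partialFst_partialSnd_helicoid (u v : ℝ) :
    gramDet (partialFst helicoid u v) (partialSnd helicoid u v) = 1 - v ^ 2 := by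
  rw [helicoid, partialSnd_ruledSurface,
    partialFst_ruledSurface (hasDerivAt_helicoidAxis u) (hasDerivAt_helicoidRuling u),
    gramDet_helicoid]

theorem gaussCurvature_helicoid (u v : ℝ) :
    gaussCurvature helicoid u v = -1 / (|1 - v ^ 2| * (1 - v ^ 2)) := by
  rw [helicoid, gaussCurvature_ruledSurface (hasDerivAt_helicoidAxis u)
    (hasDerivAt_helicoidRuling u), ldet_helicoid, gramDet_helicoid, neg_one_sq]

end Helicoid

/-- Example 4.1: the second type helicoid is spacelike with K = −1/(1 − v²)². -/
theorem stmt6 :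
    ∀ u v : ℝ, |v| < 1 →
      let φ : ℝ → ℝ → Fin 3 → ℝ := fun u v => ![-v * Real.cosh u, u, -v * Real.sinh u]
      let Fu := deriv (fun x => φ x v) u
      let Fv := deriv (fun y => φ u y) v
      let Fuu := deriv (fun x => deriv (fun x' => φ x' v) x) u
      let Fuv := deriv (fun y => deriv (fun x => φ x y) u) v
      let Fvv := deriv (fun y => deriv (fun y' => φ u y') y) v
      let c := lcross Fu Fv
      let η := (Real.sqrt |lg c c|)⁻¹ • c
      lg c c = v ^ 2 - 1
      ∧ v ^ 2 - 1 < 0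
      ∧ (lg Fuu η * lg Fvv η - (lg Fuv η) ^ 2)
          / (lg Fu Fu * lg Fv Fv - (lg Fu Fv) ^ 2) = -1 / (1 - v ^ 2) ^ 2 := by
  intro u v hv φ Fu Fv Fuu Fuv Fvv c η
  have hφ : φ = helicoid := funext₂ fun u v => (helicoid_apply u v).symm
  have hv2 : v ^ 2 < 1 := (sq_lt_one_iff_abs_lt_one v).2 hv
  refine ⟨?_, sub_neg.2 hv2, ?_⟩
  · calc lg c c = -gramDet Fu Fv := lg_lcross_self Fu Fv
      _ = -gramDet (partialFst helicoid u v) (partialSnd helicoid u v) := by rw [← hφ]; rfl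
      _ = v ^ 2 - 1 := by rw [gramDet_partialFst_partialSnd_helicoid, neg_sub]
  · change gaussCurvature φ u v = _
    rw [hφ, gaussCurvature_helicoid, abs_of_pos (sub_pos.2 hv2), ← sq]
end
end

section
/- Let e, n, ξ, κ, τ, σ be a frame system of type {time, space, space} along an interval I, and let β be the striction curve with β' = sinh σ · e + cosh σ · ξ. Then for every u ∈ I the distribution parameter of the timelike non-cylindrical ruled surface φ(u,v) = β(u) + v·e(u), namely P(u) = det(β'(u), e(u), e'(u)) / g(e'(u), e'(u)), equals cosh σ(u) / κ(u). -/
noncomputable section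

/- Modulo the ruling `e`, the velocity of the striction curve is `cosh σ • ξ`, and `e' = κ n`. So
`det(β', e, e') = κ cosh σ det(ξ, e, n)`, while `g(e', e') = κ² g(n, n)`. The Lorentzian triple
product identity `det(a, b, c) = -g(a, b ∧ c)` together with `e ∧ n = -ξ` gives
`det(ξ, e, n) = g(ξ, ξ) = 1`, and one factor `κ` cancels. -/

section LorentzAlgebra

variable (c : ℝ) (v v' w : Fin 3 → ℝ)

theorem lg_add_left : lg (v + v') w = lg v w + lg v' w := by
  simp only [lg, Pi.add_apply]
  ring

theorem lg_smul_left : lg (c • v) w = c * lg v w := by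
  simp only [lg, Pi.smul_apply, smul_eq_mul]
  ring

theorem lg_smul_right_s7 : lg v (c • w) = c * lg v w := by
  simp only [lg, Pi.smul_apply, smul_eq_mul]
  ring

theorem lg_neg_right : lg v (-w) = -lg v w := by
  simp only [lg, Pi.neg_apply]
  ring

theorem lcross_smul_right : lcross v (c • w) = c • lcross v w := by
  ext i
  fin_cases i <;>
    simp only [lcross, Pi.smul_apply, smul_eq_mul, Matrix.cons_val, Fin.mk_one, Fin.reduceFinMk,
      Fin.zero_eta] <;>
    ring

theorem lg_self_lcross : lg v (lcross v w) = 0 := by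
  simp only [lg, lcross, Matrix.cons_val]
  ring

theorem ldet_eq_neg_lg_lcross : ldet v v' w = -lg v (lcross v' w) := by
  simp only [ldet, lg, lcross, Matrix.det_fin_three, Matrix.of_apply, Matrix.cons_val]
  ring

end LorentzAlgebra

/-- The distribution parameter `det(b, e, e') / g(e', e')` of a ruled surface at a point where the
base curve has velocity `b` and the ruling `e` has derivative `e'`. All three arguments are vectors
rather than curves, and the value is the junk `0` when `e'` is lightlike or zero. -/
def distributionParameter (b e e' : Fin 3 → ℝ) : ℝ :=
  ldet b e e' / lg e' e'

section DistributionParameter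

variable {c : ℝ} (a : ℝ) (b e e' : Fin 3 → ℝ)

theorem distributionParameter_smul_ruling_add :
    distributionParameter (a • e + b) e e' = distributionParameter b e e' := by
  simp only [distributionParameter, ldet_eq_neg_lg_lcross, lg_add_left, lg_smul_left,
    lg_self_lcross, mul_zero, zero_add]

theorem distributionParameter_smul_left :
    distributionParameter (a • b) e e' = a * distributionParameter b e e' := by
  simp only [distributionParameter, ldet_eq_neg_lg_lcross, lg_smul_left, ← mul_neg, mul_div_assoc]

theorem distributionParameter_smul_right (hc : c ≠ 0) :
    distributionParameter b e (c • e') = distributionParameter b e e' / c := by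
  simp only [distributionParameter, ldet_eq_neg_lg_lcross, lcross_smul_right, lg_smul_left,
    lg_smul_right_s7, ← mul_neg]
  rw [mul_div_mul_left _ _ hc, div_div, mul_comm c]

theorem distributionParameter_of_lcross_eq_neg {e n ξ : Fin 3 → ℝ} (h : lcross e n = -ξ) :
    distributionParameter ξ e n = lg ξ ξ / lg n n := by
  rw [distributionParameter, ldet_eq_neg_lg_lcross, h, lg_neg_right, neg_neg]

end DistributionParameter

theorem stmt7_general {e β : ℝ → Fin 3 → ℝ} {n ξ : Fin 3 → ℝ} {a b κ u : ℝ} (hκ : κ ≠ 0)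
    (hn : lg n n = 1) (hξ : lg ξ ξ = 1) (hen : lcross (e u) n = -ξ)
    (he : HasDerivAt e (κ • n) u) (hβ : HasDerivAt β (a • e u + b • ξ) u) :
    distributionParameter (deriv β u) (e u) (deriv e u) = b / κ := by
  rw [hβ.deriv, he.deriv, distributionParameter_smul_ruling_add, distributionParameter_smul_left,
    distributionParameter_smul_right (hc := hκ), distributionParameter_of_lcross_eq_neg hen, hn, hξ,
    div_one, mul_one_div]

/-- Distribution parameter of the timelike ruled surface M₂: P = cosh σ / κ. -/
theorem stmt7
    (I : Set ℝ) (hI : IsOpen I)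
    (e n ξ β : ℝ → Fin 3 → ℝ) (κ τ σ : ℝ → ℝ)
    (hde : ∀ u ∈ I, DifferentiableAt ℝ e u)
    (hdn : ∀ u ∈ I, DifferentiableAt ℝ n u)
    (hdξ : ∀ u ∈ I, DifferentiableAt ℝ ξ u)
    (hdβ : ∀ u ∈ I, DifferentiableAt ℝ β u)
    (hκ0 : ∀ u ∈ I, κ u ≠ 0)
    (hee : ∀ u ∈ I, lg (e u) (e u) = -1)
    (hnn : ∀ u ∈ I, lg (n u) (n u) = 1)
    (hξξ : ∀ u ∈ I, lg (ξ u) (ξ u) = 1)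
    (hen : ∀ u ∈ I, lg (e u) (n u) = 0)
    (hnξ : ∀ u ∈ I, lg (n u) (ξ u) = 0)
    (hξe : ∀ u ∈ I, lg (ξ u) (e u) = 0)
    (hc1 : ∀ u ∈ I, lcross (e u) (n u) = -ξ u)
    (hc2 : ∀ u ∈ I, lcross (n u) (ξ u) = e u)
    (hc3 : ∀ u ∈ I, lcross (ξ u) (e u) = -n u)
    (hfe : ∀ u ∈ I, deriv e u = κ u • n u)
    (hfn : ∀ u ∈ I, deriv n u = κ u • e u - τ u • ξ u)
    (hfξ : ∀ u ∈ I, deriv ξ u = τ u • n u)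
    (hβ' : ∀ u ∈ I, deriv β u = Real.sinh (σ u) • e u + Real.cosh (σ u) • ξ u) :
    ∀ u ∈ I,
      ldet (deriv β u) (e u) (deriv e u) / lg (deriv e u) (deriv e u)
        = Real.cosh (σ u) / κ u := by
  intro u hu
  exact stmt7_general (hκ0 u hu) (hnn u hu) (hξξ u hu) (hc1 u hu)
    (hfe u hu ▸ (hde u hu).hasDerivAt) (hβ' u hu ▸ (hdβ u hu).hasDerivAt)
end
end
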